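/- Let E_n^sep denote expectation with respect to the uniform probability measure on the set SEP(n) of separable permutations of [n], and let A_n(σ) denote the length of the longest alternating subsequence of σ. Then lim_{n→∞} E_n^sep[A_n]/n = 2 − √2. -/

import Mathlib

open Finset Filter Real
open scoped Classical

/-- `σ` contains the pattern `τ` (a permutation of `Fin k` given as a function). -/
def ContainsPattern {n k : ℕ} (σ : Equiv.Perm (Fin n)) (τ : Fin k → Fin k) : Prop :=
  ∃ f : Fin k → Fin n, StrictMono f ∧ ∀ a b : Fin k, τ a < τ b ↔ σ (f a) < σ (f b)

/-- A permutation is separable iff it avoids the patterns 2413 and 3142. -/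
def Separable {n : ℕ} (σ : Equiv.Perm (Fin n)) : Prop :=
  ¬ ContainsPattern σ (![1, 3, 0, 2] : Fin 4 → Fin 4) ∧
  ¬ ContainsPattern σ (![2, 0, 3, 1] : Fin 4 → Fin 4)

/-- The set of separable permutations of `[n]`. -/
noncomputable def SEP (n : ℕ) : Finset (Equiv.Perm (Fin n)) :=
  Finset.univ.filter fun σ => Separable σ

/-- `IsAltSeq σ s l` : `l` is a strictly increasing list of indices along which the values of `σ`
alternate, starting with an ascent if `s = true` and starting with a descent if `s = false`. -/
def IsAltSeq {n : ℕ} (σ : Equiv.Perm (Fin n)) (s : Bool) (l : List (Fin n)) : Prop :=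
  l.Chain' (· < ·) ∧
  ∀ j : ℕ, ∀ hj : j + 1 < l.length,
    if decide (j % 2 = 0) = s then
      σ (l.get ⟨j, Nat.lt_of_succ_lt hj⟩) < σ (l.get ⟨j + 1, hj⟩)
    else
      σ (l.get ⟨j + 1, hj⟩) < σ (l.get ⟨j, Nat.lt_of_succ_lt hj⟩)

/-- The length of the longest alternating subsequence of `σ` of type `(s, e)`, where
`true` stands for ascent and `false` for descent.  An alternating subsequence starting with
an ascent ends with a descent iff its length is odd (and similarly in the other cases), so the
type is encoded by the parity constraint; a singleton counts as a subsequence of types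
`(+,-)` and `(-,+)` but not of types `(+,+)` and `(-,-)`. -/
noncomputable def altTypeLen {n : ℕ} (σ : Equiv.Perm (Fin n)) (s e : Bool) : ℕ :=
  sSup {k | ∃ l : List (Fin n), IsAltSeq σ s l ∧ l.length = k ∧
    k % 2 = (if s = e then 0 else 1)}

/-- The length `Aₙ(σ)` of the longest alternating subsequence of `σ`. -/
noncomputable def altLen {n : ℕ} (σ : Equiv.Perm (Fin n)) : ℕ :=
  sSup {k | ∃ l : List (Fin n), (IsAltSeq σ true l ∨ IsAltSeq σ false l) ∧
    l.length = k ∧ 1 ≤ k}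

/-- Expectation with respect to the uniform probability measure on `SEP n`. -/
noncomputable def sepExp (n : ℕ) (f : Equiv.Perm (Fin n) → ℝ) : ℝ :=
  (∑ σ ∈ SEP n, f σ) / (SEP n).card

/-- Variance with respect to the uniform probability measure on `SEP n`. -/
noncomputable def sepVar (n : ℕ) (f : Equiv.Perm (Fin n) → ℝ) : ℝ :=
  sepExp n (fun σ => (f σ - sepExp n f) ^ 2)

/-- `B₁^{+,n}(σ)`: the length of the first indecomposable block (0-indexed positions). -/
noncomputable def Bplus {n : ℕ} (σ : Equiv.Perm (Fin n)) : ℕ :=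
  sInf {j | 1 ≤ j ∧ ∀ i : Fin n, (i : ℕ) < j → (σ i : ℕ) < j}

/-- `B₁^{-,n}(σ)`: the length of the first skew indecomposable block (0-indexed positions). -/
noncomputable def Bminus {n : ℕ} (σ : Equiv.Perm (Fin n)) : ℕ :=
  sInf {j | 1 ≤ j ∧ ∀ i : Fin n, (i : ℕ) < j → n - j ≤ (σ i : ℕ)}

/-- Expectation over indecomposable separable permutations of `[n]`, i.e. the conditional
expectation under the uniform measure on `SEP n` given `{B₁^{+,n} = n}`. -/
noncomputable def indecExp (n : ℕ) (f : Equiv.Perm (Fin n) → ℝ) : ℝ :=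
  (∑ σ ∈ (SEP n).filter (fun σ => Bplus σ = n), f σ) /
    ((SEP n).filter (fun σ => Bplus σ = n)).card

/-! ### Words avoiding `2413` and `3142` -/

/-- `l` has no subsequence order-isomorphic to `2413` or `3142`. -/
def PatternFree {α : Type*} [LinearOrder α] (l : List α) : Prop :=
  ∀ w x y z, [w, x, y, z].Sublist l → ¬(y < w ∧ w < z ∧ z < x) ∧ ¬(x < z ∧ z < w ∧ w < y)

/-- `l` splits into two nonempty consecutive parts, the first `r`-below the second. -/
def Splits {α : Type*} (r : α → α → Prop) (l : List α) : Prop :=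
  ∃ a b, a ≠ [] ∧ b ≠ [] ∧ l = a ++ b ∧ ∀ x ∈ a, ∀ y ∈ b, r x y

theorem PatternFree.sublist {α : Type*} [LinearOrder α] {l l' : List α} (h : PatternFree l)
    (hl : l'.Sublist l) : PatternFree l' :=
  fun w x y z hs => h w x y z (hs.trans hl)

theorem PatternFree.dual {α : Type*} [LinearOrder α] {l : List α} (h : PatternFree l) :
    PatternFree (α := αᵒᵈ) l :=
  fun w x y z hs =>
    ⟨fun ⟨h1, h2, h3⟩ => (h w x y z hs).2 ⟨h3, h2, h1⟩,
      fun ⟨h1, h2, h3⟩ => (h w x y z hs).1 ⟨h3, h2, h1⟩⟩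

theorem Splits.two_le_length {α : Type*} {r : α → α → Prop} {l : List α} (h : Splits r l) :
    2 ≤ l.length := by
  obtain ⟨a, b, ha, hb, rfl, -⟩ := h
  have := List.length_pos_of_ne_nil ha
  have := List.length_pos_of_ne_nil hb
  simp; omega

theorem Splits.not_splits_gt {α : Type*} [LinearOrder α] {l : List α}
    (h : Splits (· < ·) l) : ¬ Splits (· > ·) l := by
  rintro ⟨c, d, hc, hd, hl, h2⟩
  obtain ⟨a, b, ha, hb, rfl, h1⟩ := h
  have e1 : a.head ha = c.head hc := by
    rw [← List.head_append_of_ne_nil ha (l' := b), ← List.head_append_of_ne_nil hc (l' := d)]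
    · simp only [hl]
    · simp [hc]
    · simp [ha]
  have e2 : b.getLast hb = d.getLast hd := by
    rw [← List.getLast_append_of_right_ne_nil a b hb,
      ← List.getLast_append_of_right_ne_nil c d hd]
    simp only [hl]
  have h3 := h1 _ (List.head_mem ha) _ (List.getLast_mem hb)
  have h4 := h2 _ (List.head_mem hc) _ (List.getLast_mem hd)
  rw [e1, e2] at h3
  exact lt_asymm h3 h4

/-- If removing the last letter leaves a word that splits, then the whole word splits. -/
theorem splits_concat {α : Type*} [LinearOrder α] (l : List α) (v : α)
    (ih : ∀ a : List α, a.length ≤ l.length → 2 ≤ a.length → a.Nodup → PatternFree a →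
      Splits (· < ·) a ∨ Splits (· > ·) a)
    (hn : (l ++ [v]).Nodup) (hp : PatternFree (l ++ [v])) (hs : Splits (· < ·) l) :
    Splits (· < ·) (l ++ [v]) ∨ Splits (· > ·) (l ++ [v]) := by
  have hex : ∃ k, ∃ a b : List α, a.length = k ∧ a ≠ [] ∧ b ≠ [] ∧ l = a ++ b ∧
      ∀ x ∈ a, ∀ y ∈ b, x < y := by
    obtain ⟨a, b, h⟩ := hs
    exact ⟨_, a, b, rfl, h⟩
  obtain ⟨a, b, hk, ha, hb, rfl, hab⟩ := Nat.find_spec hex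
  have hmin : ∀ a' b' : List α, a'.length < a.length → a' ≠ [] → b' ≠ [] → a ++ b = a' ++ b' →
      ¬ ∀ x ∈ a', ∀ y ∈ b', x < y := by
    intro a' b' hl h1 h2 h3 h4
    exact Nat.find_min hex (hk ▸ hl) ⟨a', b', rfl, h1, h2, h3, h4⟩
  have hva : ∀ x ∈ a, x ≠ v := by
    intro x hx
    have := List.disjoint_of_nodup_append hn (a := x) (by simp [hx])
    simpa using this
  by_cases hA : ∀ x ∈ a, x < v
  · left
    refine ⟨a, b ++ [v], ha, by simp, by simp, ?_⟩
    intro x hx y hy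
    rcases List.mem_append.1 hy with hy | hy
    · exact hab x hx y hy
    · rw [List.mem_singleton.1 hy]; exact hA x hx
  push Not at hA
  obtain ⟨t, hta, hvt⟩ := hA
  by_cases hB : ∀ x ∈ a, v < x
  · right
    refine ⟨a ++ b, [v], by simp [ha], by simp, by simp, ?_⟩
    intro x hx y hy
    rw [List.mem_singleton.1 hy]
    rcases List.mem_append.1 hx with hx | hx
    · exact hB x hx
    · exact hvt.trans_lt (hab t hta x hx)
  push Not at hB
  obtain ⟨s, hsa, hsv⟩ := hB
  exfalso
  have hsv' : s < v := lt_of_le_of_ne hsv (hva s hsa)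
  have hvt' : v < t := lt_of_le_of_ne hvt (hva t hta).symm
  have h2 : 2 ≤ a.length := by
    rcases a with _ | ⟨p, _ | ⟨q, a⟩⟩
    · simp at ha
    · simp only [List.mem_singleton] at hsa hta
      subst hsa; subst hta
      exact absurd (hsv'.trans hvt') (lt_irrefl _)
    · simp
  have hasub : a.Sublist (a ++ b ++ [v]) := by simp
  rcases ih a (by simp) h2 (hn.sublist hasub) (hp.sublist hasub) with h | h
  · obtain ⟨c, d, hc, hd, rfl, hcd⟩ := h
    refine hmin c (d ++ b) ?_ hc (by simp [hd]) (by simp) ?_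
    · have := List.length_pos_of_ne_nil hd
      simp; omega
    · intro x hx y hy
      rcases List.mem_append.1 hy with hy | hy
      · exact hcd x hx y hy
      · exact hab x (by simp [hx]) y hy
  · obtain ⟨c, d, hc, hd, rfl, hcd⟩ := h
    have key : ∀ g ∈ c, ∀ e ∈ d, e < v → v < g → False := by
      intro g hg e he h1 h2
      obtain ⟨x, hx⟩ := List.exists_mem_of_ne_nil b hb
      refine (hp g e x v ?_).2 ⟨h1, h2, hab g (by simp [hg]) x hx⟩
      have := (((List.singleton_sublist.2 hg).append (List.singleton_sublist.2 he)).append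
        (List.singleton_sublist.2 hx)).append (List.Sublist.refl [v])
      simpa using this
    obtain ⟨g, hg⟩ := List.exists_mem_of_ne_nil c hc
    obtain ⟨e, he⟩ := List.exists_mem_of_ne_nil d hd
    have ht : ∃ g ∈ c, v < g := by
      rcases List.mem_append.1 hta with h | h
      · exact ⟨t, h, hvt'⟩
      · exact ⟨g, hg, hvt'.trans (hcd g hg t h)⟩
    have hs' : ∃ e ∈ d, e < v := by
      rcases List.mem_append.1 hsa with h | h
      · exact ⟨e, he, lt_trans (hcd s h e he) hsv'⟩
      · exact ⟨s, h, hsv'⟩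
    obtain ⟨g, hg, h1⟩ := ht
    obtain ⟨e, he, h2⟩ := hs'
    exact key g hg e he h2 h1

/-- A word of length at least two avoiding `2413` and `3142` is a direct or a skew sum. -/
theorem PatternFree.splits_or {α : Type*} [LinearOrder α] {l : List α} (h2 : 2 ≤ l.length)
    (hn : l.Nodup) (hp : PatternFree l) : Splits (· < ·) l ∨ Splits (· > ·) l := by
  induction hk : l.length using Nat.strong_induction_on generalizing l with
  | _ k ih =>
    rcases List.eq_nil_or_concat l with rfl | ⟨l', v, rfl⟩
    · simp at h2
    rw [List.concat_eq_append] at *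
    simp only [List.length_append, List.length_singleton] at h2 hk
    have ih' : ∀ a : List α, a.length ≤ l'.length → 2 ≤ a.length → a.Nodup → PatternFree a →
        Splits (· < ·) a ∨ Splits (· > ·) a :=
      fun a h1 h2 h3 h4 => ih a.length (by omega) h2 h3 h4 rfl
    by_cases h1 : l'.length = 1
    · obtain ⟨u, rfl⟩ := List.length_eq_one_iff.1 h1
      have huv : u ≠ v := by
        intro h; simp [h] at hn
      rcases lt_or_gt_of_ne huv with h | h
      · exact Or.inl ⟨[u], [v], by simp, by simp, by simp, by simpa using h⟩
      · exact Or.inr ⟨[u], [v], by simp, by simp, by simp, by simpa using h⟩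
    have hsub : l'.Sublist (l' ++ [v]) := by simp
    rcases ih' l' le_rfl (by omega) (hn.sublist hsub) (hp.sublist hsub) with h | h
    · exact splits_concat l' v ih' hn hp h
    · exact (splits_concat (α := αᵒᵈ) l' v
        (fun a h1 h2 h3 h4 => (ih' a h1 h2 h3 h4.dual).symm) hn hp.dual h).symm

/-! ### Direction changes and alternating subsequences of words -/

/-- The number of interior letters of a word at which it changes direction. -/
def dirChanges : List ℕ → ℕ
  | a :: b :: c :: t => (if a < b ↔ b < c then 0 else 1) + dirChanges (b :: c :: t)
  | _ => 0

/-- `1` if the word starts with a descent and `0` otherwise. -/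
def firstDesc : List ℕ → ℕ
  | a :: b :: _ => if a < b then 0 else 1
  | _ => 0

/-- `1` if the word ends with a descent and `0` otherwise. -/
def lastDesc : List ℕ → ℕ
  | [a, b] => if a < b then 0 else 1
  | _ :: b :: c :: t => lastDesc (b :: c :: t)
  | _ => 0

theorem dirChanges_append {l m : List ℕ} (hl : l ≠ []) (hm : m ≠ [])
    (h : ∀ x ∈ l, ∀ y ∈ m, x < y) :
    dirChanges (l ++ m) = dirChanges l + dirChanges m + (lastDesc l + firstDesc m) := by
  induction l with
  | nil => exact absurd rfl hl
  | cons a l ih =>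
    rcases l with _ | ⟨b, _ | ⟨c, t⟩⟩
    · rcases m with _ | ⟨b, _ | ⟨c, m⟩⟩
      · exact absurd rfl hm
      · simp [dirChanges, lastDesc, firstDesc]
      · have : a < b := h a (by simp) b (by simp)
        simp [dirChanges, lastDesc, firstDesc, this]; omega
    · have ih := ih (by simp) (fun x hx => h x (by simp at hx ⊢; simp [hx]))
      rcases m with _ | ⟨c, m⟩
      · exact absurd rfl hm
      · have : b < c := h b (by simp) c (by simp)
        simp only [List.cons_append, List.nil_append] at ih ⊢
        rw [dirChanges, ih]
        simp [dirChanges, lastDesc, this]; omega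
    · have ih := ih (by simp) (fun x hx => h x (List.mem_cons_of_mem _ hx))
      simp only [List.cons_append] at ih ⊢
      rw [dirChanges, ih, dirChanges, lastDesc]; omega

theorem lastDesc_append {l m : List ℕ} (hl : l ≠ []) (hm : m ≠ [])
    (h : ∀ x ∈ l, ∀ y ∈ m, x < y) : lastDesc (l ++ m) = lastDesc m := by
  induction l with
  | nil => exact absurd rfl hl
  | cons a l ih =>
    rcases l with _ | ⟨b, t⟩
    · rcases m with _ | ⟨b, _ | ⟨c, m⟩⟩
      · exact absurd rfl hm
      · have : a < b := h a (by simp) b (by simp)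
        simp [lastDesc, this]
      · simp [lastDesc]
    · have ih := ih (by simp) (fun x hx => h x (List.mem_cons_of_mem _ hx))
      rw [← ih]
      rcases t with _ | ⟨c, t⟩
      · rcases m with _ | ⟨c, m⟩
        · exact absurd rfl hm
        · simp [lastDesc]
      · simp [lastDesc]

theorem dirChanges_map {f : ℕ → ℕ} (hf : StrictMono f) (l : List ℕ) :
    dirChanges (l.map f) = dirChanges l := by
  induction l with
  | nil => rfl
  | cons a l ih =>
    rcases l with _ | ⟨b, _ | ⟨c, t⟩⟩
    · rfl
    · rfl
    · simp only [List.map_cons] at ih ⊢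
      simp only [dirChanges, hf.lt_iff_lt, ih]

theorem firstDesc_map {f : ℕ → ℕ} (hf : StrictMono f) (l : List ℕ) :
    firstDesc (l.map f) = firstDesc l := by
  rcases l with _ | ⟨a, _ | ⟨b, t⟩⟩
  · rfl
  · rfl
  · simp only [List.map_cons, firstDesc, hf.lt_iff_lt]

theorem lastDesc_map {f : ℕ → ℕ} (hf : StrictMono f) (l : List ℕ) :
    lastDesc (l.map f) = lastDesc l := by
  induction l with
  | nil => rfl
  | cons a l ih =>
    rcases l with _ | ⟨b, _ | ⟨c, t⟩⟩
    · rfl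
    · simp only [List.map_cons, List.map_nil, lastDesc, hf.lt_iff_lt]
    · simp only [List.map_cons] at ih ⊢
      simp only [lastDesc, ih]

theorem lt_iff_not_lt_of_anti {f : ℕ → ℕ} {l : List ℕ} (hf : ∀ x ∈ l, ∀ y ∈ l, f x < f y ↔ y < x)
    {a b : ℕ} (ha : a ∈ l) (hb : b ∈ l) (hab : a ≠ b) : f a < f b ↔ ¬ a < b := by
  rw [hf a ha b hb]; omega

theorem dirChanges_map_anti {f : ℕ → ℕ} {l : List ℕ} (hn : l.Nodup)
    (hf : ∀ x ∈ l, ∀ y ∈ l, f x < f y ↔ y < x) : dirChanges (l.map f) = dirChanges l := by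
  induction l with
  | nil => rfl
  | cons a l ih =>
    rcases l with _ | ⟨b, _ | ⟨c, t⟩⟩
    · rfl
    · rfl
    · have ih := ih (List.nodup_cons.1 hn).2
        (fun x hx y hy => hf x (List.mem_cons_of_mem _ hx) y (List.mem_cons_of_mem _ hy))
      simp only [List.nodup_cons, List.mem_cons, not_or] at hn
      simp only [List.map_cons] at ih ⊢
      simp only [dirChanges, ih, lt_iff_not_lt_of_anti hf (a := a) (b := b) (by simp) (by simp)
        hn.1.1, lt_iff_not_lt_of_anti hf (a := b) (b := c) (by simp) (by simp) hn.2.1.1, not_iff_not]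

theorem firstDesc_map_anti {f : ℕ → ℕ} {l : List ℕ} (hn : l.Nodup) (h2 : 2 ≤ l.length)
    (hf : ∀ x ∈ l, ∀ y ∈ l, f x < f y ↔ y < x) : firstDesc (l.map f) + firstDesc l = 1 := by
  rcases l with _ | ⟨a, _ | ⟨b, t⟩⟩
  · simp at h2
  · simp at h2
  · simp only [List.nodup_cons, List.mem_cons, not_or] at hn
    simp only [List.map_cons, firstDesc,
      lt_iff_not_lt_of_anti hf (a := a) (b := b) (by simp) (by simp) hn.1.1]
    split_ifs <;> simp_all

theorem lastDesc_map_anti {f : ℕ → ℕ} {l : List ℕ} (hn : l.Nodup) (h2 : 2 ≤ l.length)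
    (hf : ∀ x ∈ l, ∀ y ∈ l, f x < f y ↔ y < x) : lastDesc (l.map f) + lastDesc l = 1 := by
  induction l with
  | nil => simp at h2
  | cons a l ih =>
    rcases l with _ | ⟨b, _ | ⟨c, t⟩⟩
    · simp at h2
    · simp only [List.nodup_cons, List.mem_cons, not_or] at hn
      simp only [List.map_cons, List.map_nil, lastDesc,
        lt_iff_not_lt_of_anti hf (a := a) (b := b) (by simp) (by simp) hn.1.1]
      split_ifs <;> simp_all
    · exact ih (List.nodup_cons.1 hn).2 (by simp)
        (fun x hx y hy => hf x (List.mem_cons_of_mem _ hx) y (List.mem_cons_of_mem _ hy))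

/-- `a` and `b` form an ascent if `s = true` and a descent if `s = false`. -/
def Step (s : Bool) (a b : ℕ) : Prop :=
  if s = true then a < b else b < a

/-- The word alternates, starting with an ascent if `s = true` and a descent otherwise. -/
def Alternates : Bool → List ℕ → Prop
  | s, a :: b :: t => Step s a b ∧ Alternates (!s) (b :: t)
  | _, _ => True

theorem Step.trans {s : Bool} {a b c : ℕ} (h1 : Step s a b) (h2 : Step s b c) : Step s a c := by
  cases s <;> simp [Step] at * <;> omega

theorem Step.cases_of_ne {a b : ℕ} (h : a ≠ b) (s : Bool) : Step s a b ∨ Step (!s) a b := by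
  cases s <;> simp [Step] <;> omega

theorem Step.eq_of_step {s d : Bool} {a b : ℕ} (h1 : Step s a b) (h2 : Step d a b) : s = d := by
  cases s <;> cases d <;> simp [Step] at * <;> omega

theorem Step.ite_eq {s d : Bool} {a b c : ℕ} (h1 : Step s a b) (h2 : Step d b c) :
    (if a < b ↔ b < c then 0 else 1) = if s = d then 0 else 1 := by
  cases s <;> cases d <;> simp [Step] at * <;> omega

theorem Alternates.tail {s : Bool} {a : ℕ} {l : List ℕ} (h : Alternates s (a :: l)) :
    Alternates (!s) l := by
  rcases l with _ | ⟨b, t⟩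
  · trivial
  · exact h.2

theorem exists_step {l : List ℕ} {a b : ℕ} (hn : (a :: b :: l).Nodup) : ∃ d, Step d a b := by
  have : a ≠ b := by
    rintro rfl; simp at hn
  rcases Step.cases_of_ne this true with h | h
  · exact ⟨_, h⟩
  · exact ⟨_, h⟩

theorem exists_alternates {a b : ℕ} {t : List ℕ} {d : Bool} (hn : (a :: b :: t).Nodup)
    (hd : Step d a b) : ∃ v, (a :: v).Sublist (a :: b :: t) ∧ Alternates d (a :: v) ∧
      (a :: v).length = dirChanges (a :: b :: t) + 2 := by
  induction t generalizing a b d with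
  | nil => exact ⟨[b], by simp, ⟨hd, trivial⟩, by simp [dirChanges]⟩
  | cons c t ih =>
    have hn' := (List.nodup_cons.1 hn).2
    obtain ⟨d', hd'⟩ := exists_step hn'
    obtain ⟨v, hv, hal, hlen⟩ := ih hn' hd'
    rw [dirChanges, hd.ite_eq hd']
    by_cases h : d = d'
    · subst h
      rcases v with _ | ⟨x, v⟩
      · simp at hlen
      refine ⟨x :: v, ?_, ⟨hd.trans hal.1, hal.2⟩, by simpa using hlen⟩
      exact ((List.sublist_cons_self b _).trans hv).cons_cons a
    · have h' : (!d) = d' := by cases d <;> cases d' <;> simp_all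
      refine ⟨b :: v, hv.cons_cons a, ⟨hd, h'.symm ▸ hal⟩, ?_⟩
      simp only [List.length_cons, if_neg h] at hlen ⊢
      omega

theorem Alternates.length_le {a b : ℕ} {t : List ℕ} {d s : Bool} {v : List ℕ}
    (hn : (a :: b :: t).Nodup) (hd : Step d a b) (hv : v.Sublist (a :: b :: t))
    (hal : Alternates s v) :
    v.length ≤ dirChanges (a :: b :: t) + if s = d then 2 else 1 := by
  induction t generalizing a b d s v with
  | nil =>
    have h2 := hv.length_le
    simp only [List.length_cons, List.length_nil, dirChanges] at h2 ⊢
    by_cases h : s = d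
    · simpa [h] using h2
    · by_contra hcon
      have : v = [a, b] := hv.eq_of_length (by simp [h] at hcon ⊢; omega)
      subst this
      exact h (hal.1.eq_of_step hd)
  | cons c t ih =>
    have hn' := (List.nodup_cons.1 hn).2
    obtain ⟨d', hd'⟩ := exists_step hn'
    have hskip : ∀ u : List ℕ, u.Sublist (b :: c :: t) → Alternates s u →
        u.length ≤ dirChanges (a :: b :: c :: t) + if s = d then 2 else 1 := by
      intro u hu hs
      have := ih hn' hd' hu hs
      rw [dirChanges, hd.ite_eq hd']
      cases s <;> cases d <;> cases d' <;> simp at * <;> omega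
    rcases List.sublist_cons_iff.1 hv with hv | ⟨r, rfl, hr⟩
    · exact hskip v hv hal
    by_cases h : s = d
    · have := ih hn' hd' hr hal.tail
      rw [dirChanges, hd.ite_eq hd']
      cases s <;> cases d <;> cases d' <;> simp at * <;> omega
    · rcases r with _ | ⟨x, r⟩
      · simp [h]
      have hxb : x ≠ b := by
        rintro rfl; exact h (hal.1.eq_of_step hd)
      have hx : (x :: r).Sublist (c :: t) := by
        rcases List.sublist_cons_iff.1 hr with h' | ⟨r', h', -⟩
        · exact h'
        · simp only [List.cons.injEq] at h'; exact absurd h'.1 hxb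
      have hba : Step s b a := by
        cases s <;> cases d <;> simp [Step] at * <;> omega
      have := hskip (b :: x :: r) (hx.cons_cons b) ⟨hba.trans hal.1, hal.2⟩
      simpa using this

/-! ### Permutations as words -/

/-- The one-line notation of a permutation of `Fin n`, as a word in `{0, …, n - 1}`. -/
def word {n : ℕ} (σ : Equiv.Perm (Fin n)) : List ℕ :=
  (List.finRange n).map fun i => (σ i : ℕ)

/-- `l` is the one-line notation of a permutation of `{0, …, n - 1}`. -/
def IsWord (n : ℕ) (l : List ℕ) : Prop :=
  l.Nodup ∧ l.length = n ∧ ∀ x ∈ l, x < n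

theorem word_injective {n : ℕ} : Function.Injective (word : Equiv.Perm (Fin n) → List ℕ) := by
  intro σ τ h
  ext i
  have := List.map_inj_left.1 h i (List.mem_finRange i)
  exact this

theorem isWord_word {n : ℕ} (σ : Equiv.Perm (Fin n)) : IsWord n (word σ) := by
  refine ⟨(List.nodup_finRange n).map (Fin.val_injective.comp σ.injective), by simp [word], ?_⟩
  intro x hx
  obtain ⟨i, -, rfl⟩ := List.mem_map.1 hx
  exact (σ i).2

theorem IsWord.exists_word {n : ℕ} {l : List ℕ} (h : IsWord n l) :
    ∃ σ : Equiv.Perm (Fin n), word σ = l := by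
  obtain ⟨hn, rfl, hlt⟩ := h
  let f : Fin l.length → Fin l.length := fun i => ⟨l.get i, hlt _ (List.get_mem l i)⟩
  have hf : Function.Injective f := by
    intro i j hij
    simp only [f, Fin.mk.injEq] at hij
    exact hn.injective_get hij
  refine ⟨Equiv.ofBijective f (Finite.injective_iff_bijective.1 hf), ?_⟩
  apply List.ext_get (by simp [word])
  intro i h1 h2
  simp [word, f]

theorem map_sublist_word {n : ℕ} (σ : Equiv.Perm (Fin n)) {l : List (Fin n)}
    (hl : l.IsChain (· < ·)) : (l.map fun i => (σ i : ℕ)).Sublist (word σ) := by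
  refine List.Sublist.map _ ?_
  have hp : l.Pairwise (· < ·) := List.isChain_iff_pairwise.1 hl
  refine List.sublist_of_subperm_of_pairwise (r := (· < ·)) ?_ hp (List.pairwise_lt_finRange n)
  exact List.subperm_of_subset (hp.imp fun h => h.ne) (fun x _ => List.mem_finRange x)

theorem exists_of_sublist_word {n : ℕ} {σ : Equiv.Perm (Fin n)} {v : List ℕ}
    (hv : v.Sublist (word σ)) :
    ∃ l : List (Fin n), l.IsChain (· < ·) ∧ v = l.map fun i => (σ i : ℕ) := by
  obtain ⟨l, hl, rfl⟩ := List.sublist_map_iff.1 hv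
  exact ⟨l, ((List.pairwise_lt_finRange n).sublist hl).isChain, rfl⟩

theorem separable_iff {n : ℕ} (σ : Equiv.Perm (Fin n)) :
    Separable σ ↔ PatternFree (word σ) := by
  constructor
  · rintro ⟨h1, h2⟩ w x y z hs
    obtain ⟨l, hl, hm⟩ := exists_of_sublist_word hs
    have hlen : l.length = 4 := by simpa using (congrArg List.length hm).symm
    obtain ⟨p, q, r, s, rfl⟩ : ∃ p q r s, l = [p, q, r, s] := by
      rcases l with _ | ⟨p, _ | ⟨q, _ | ⟨r, _ | ⟨s, _ | ⟨t, l⟩⟩⟩⟩⟩ <;> simp at hlen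
      exact ⟨p, q, r, s, rfl⟩
    simp only [List.map_cons, List.map_nil, List.cons.injEq, and_true] at hm
    obtain ⟨rfl, rfl, rfl, rfl⟩ := hm
    simp only [List.isChain_cons_cons, List.isChain_singleton, and_true] at hl
    obtain ⟨hpq, hqr, hrs⟩ := hl
    have hmono : StrictMono (![p, q, r, s] : Fin 4 → Fin n) := by
      rw [Fin.strictMono_iff_lt_succ]
      intro i
      fin_cases i <;> simpa
    constructor
    · intro h
      refine h1 ⟨![p, q, r, s], hmono, ?_⟩
      intro a b
      simp only [Fin.val_fin_lt] at h
      fin_cases a <;> fin_cases b <;> simp <;> order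
    · intro h
      refine h2 ⟨![p, q, r, s], hmono, ?_⟩
      intro a b
      simp only [Fin.val_fin_lt] at h
      fin_cases a <;> fin_cases b <;> simp <;> order
  · intro h
    have key : ∀ f : Fin 4 → Fin n, StrictMono f →
        [((σ (f 0) : Fin n) : ℕ), σ (f 1), σ (f 2), σ (f 3)].Sublist (word σ) := by
      intro f hf
      refine map_sublist_word σ (l := [f 0, f 1, f 2, f 3]) ?_
      simp only [List.isChain_cons_cons, List.isChain_singleton, and_true]
      exact ⟨hf (by decide), hf (by decide), hf (by decide)⟩
    constructor
    · rintro ⟨f, hf, hpat⟩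
      exact (h _ _ _ _ (key f hf)).1
        ⟨(hpat 2 0).1 (by decide), (hpat 0 3).1 (by decide), (hpat 3 1).1 (by decide)⟩
    · rintro ⟨f, hf, hpat⟩
      exact (h _ _ _ _ (key f hf)).2
        ⟨(hpat 1 3).1 (by decide), (hpat 3 0).1 (by decide), (hpat 0 2).1 (by decide)⟩

theorem isAltSeq_iff {n : ℕ} (σ : Equiv.Perm (Fin n)) (s : Bool) (l : List (Fin n)) :
    IsAltSeq σ s l ↔ l.IsChain (· < ·) ∧ Alternates s (l.map fun i => (σ i : ℕ)) := by
  refine and_congr Iff.rfl ?_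
  induction l generalizing s with
  | nil => simp [Alternates]
  | cons a l ih =>
    rcases l with _ | ⟨b, t⟩
    · simp [Alternates]
    · simp only [List.map_cons, Alternates] at ih ⊢
      rw [← ih (!s)]
      constructor
      · intro h
        refine ⟨?_, fun j hj => ?_⟩
        · have := h 0 (by simp)
          cases s <;> simpa [Step] using this
        · have := h (j + 1) (by simpa using hj)
          rcases Nat.mod_two_eq_zero_or_one j with hj | hj <;>
            cases s <;> simpa [hj, Nat.add_mod] using this
      · rintro ⟨h0, h⟩ j hj
        rcases j with _ | j
        · cases s <;> simpa [Step] using h0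
        · have := h j (by simpa using hj)
          rcases Nat.mod_two_eq_zero_or_one j with hj | hj <;>
            cases s <;> simpa [hj, Nat.add_mod] using this

theorem altLen_eq {n : ℕ} (hn : 2 ≤ n) (σ : Equiv.Perm (Fin n)) :
    altLen σ = dirChanges (word σ) + 2 := by
  obtain ⟨hnd, hlen, -⟩ := isWord_word σ
  obtain ⟨a, b, t, hw⟩ : ∃ a b t, word σ = a :: b :: t := by
    rcases h : word σ with _ | ⟨a, _ | ⟨b, t⟩⟩
    · simp [h] at hlen; omega
    · simp [h] at hlen; omega
    · exact ⟨a, b, t, rfl⟩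
  rw [hw] at hnd
  obtain ⟨d, hd⟩ := exists_step hnd
  refine IsGreatest.csSup_eq ⟨?_, ?_⟩
  · obtain ⟨v, hv, hal, hvl⟩ := exists_alternates hnd hd
    rw [← hw] at hv
    obtain ⟨l, hl, hm⟩ := exists_of_sublist_word hv
    rw [hm] at hal hvl
    have h := (isAltSeq_iff σ d l).2 ⟨hl, hal⟩
    refine ⟨l, ?_, by rw [hw, ← hvl, List.length_map], by omega⟩
    cases d
    · exact Or.inr h
    · exact Or.inl h
  · have hle : ∀ s l, IsAltSeq σ s l → l.length ≤ dirChanges (word σ) + 2 := by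
      intro s l h
      obtain ⟨h1, h2⟩ := (isAltSeq_iff σ s l).1 h
      have h3 := map_sublist_word σ h1
      rw [hw] at h3 ⊢
      have h4 := h2.length_le hnd hd h3
      rw [List.length_map] at h4
      split_ifs at h4 <;> omega
    rintro k ⟨l, h | h, rfl, -⟩
    · exact hle _ _ h
    · exact hle _ _ h

/-! ### Decomposition of separable words -/

/-- The one-line notations of the separable permutations of `[n]`. -/
noncomputable def sepWords (n : ℕ) : Finset (List ℕ) :=
  (SEP n).image word

theorem mem_sepWords {n : ℕ} {l : List ℕ} : l ∈ sepWords n ↔ IsWord n l ∧ PatternFree l := by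
  simp only [sepWords, SEP, Finset.mem_image, Finset.mem_filter, Finset.mem_univ, true_and]
  constructor
  · rintro ⟨σ, hσ, rfl⟩
    exact ⟨isWord_word σ, (separable_iff σ).1 hσ⟩
  · rintro ⟨h, hp⟩
    obtain ⟨σ, rfl⟩ := h.exists_word
    exact ⟨σ, (separable_iff σ).2 hp, rfl⟩

theorem sum_sepWords_eq {n : ℕ} (f : List ℕ → ℝ) :
    ∑ l ∈ sepWords n, f l = ∑ σ ∈ SEP n, f (word σ) :=
  Finset.sum_image fun _ _ _ _ h => word_injective h

/-- The nonempty separable words that are not direct sums. -/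
noncomputable def indecWords (n : ℕ) : Finset (List ℕ) :=
  (sepWords n).filter fun l => l ≠ [] ∧ ¬ Splits (· < ·) l

theorem mem_indecWords {n : ℕ} {l : List ℕ} :
    l ∈ indecWords n ↔ (IsWord n l ∧ PatternFree l) ∧ l ≠ [] ∧ ¬ Splits (· < ·) l := by
  rw [indecWords, Finset.mem_filter, mem_sepWords]

/-- The direct sum of two words. -/
def directSum (l m : List ℕ) : List ℕ :=
  l ++ m.map (l.length + ·)

theorem IsWord.mem_iff {n : ℕ} {l : List ℕ} (h : IsWord n l) {x : ℕ} : x ∈ l ↔ x < n := by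
  obtain ⟨hn, hlen, hlt⟩ := h
  have : l.toFinset = Finset.range n := by
    apply Finset.eq_of_subset_of_card_le
    · intro y hy
      simpa using hlt y (by simpa using hy)
    · rw [List.toFinset_card_of_nodup hn, hlen, Finset.card_range]
  rw [← List.mem_toFinset, this, Finset.mem_range]

theorem PatternFree.map {l : List ℕ} {f : ℕ → ℕ} (h : PatternFree l)
    (hf : ∀ x ∈ l, ∀ y ∈ l, f x < f y ↔ x < y) : PatternFree (l.map f) := by
  intro w x y z hs
  obtain ⟨l', hl', hm⟩ := List.sublist_map_iff.1 hs
  obtain ⟨p, q, r, s, rfl⟩ : ∃ p q r s, l' = [p, q, r, s] := by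
    rcases l' with _ | ⟨p, _ | ⟨q, _ | ⟨r, _ | ⟨s, _ | ⟨t, l⟩⟩⟩⟩⟩ <;> simp at hm
    exact ⟨p, q, r, s, rfl⟩
  simp only [List.map_cons, List.map_nil, List.cons.injEq, and_true] at hm
  obtain ⟨rfl, rfl, rfl, rfl⟩ := hm
  have hp : p ∈ l := hl'.subset (by simp)
  have hq : q ∈ l := hl'.subset (by simp)
  have hr : r ∈ l := hl'.subset (by simp)
  have hs : s ∈ l := hl'.subset (by simp)
  rw [hf r hr p hp, hf p hp s hs, hf s hs q hq, hf q hq s hs, hf s hs p hp, hf p hp r hr]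
  exact h p q r s hl'

theorem PatternFree.map_anti {l : List ℕ} {f : ℕ → ℕ} (h : PatternFree l)
    (hf : ∀ x ∈ l, ∀ y ∈ l, f x < f y ↔ y < x) : PatternFree (l.map f) := by
  intro w x y z hs
  obtain ⟨l', hl', hm⟩ := List.sublist_map_iff.1 hs
  obtain ⟨p, q, r, s, rfl⟩ : ∃ p q r s, l' = [p, q, r, s] := by
    rcases l' with _ | ⟨p, _ | ⟨q, _ | ⟨r, _ | ⟨s, _ | ⟨t, l⟩⟩⟩⟩⟩ <;> simp at hm
    exact ⟨p, q, r, s, rfl⟩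
  simp only [List.map_cons, List.map_nil, List.cons.injEq, and_true] at hm
  obtain ⟨rfl, rfl, rfl, rfl⟩ := hm
  have hp : p ∈ l := hl'.subset (by simp)
  have hq : q ∈ l := hl'.subset (by simp)
  have hr : r ∈ l := hl'.subset (by simp)
  have hs : s ∈ l := hl'.subset (by simp)
  rw [hf r hr p hp, hf p hp s hs, hf s hs q hq, hf q hq s hs, hf s hs p hp, hf p hp r hr]
  have := h p q r s hl'
  tauto

theorem PatternFree.append {l m : List ℕ} (hl : PatternFree l) (hm : PatternFree m)
    (h : ∀ x ∈ l, ∀ y ∈ m, x < y) : PatternFree (l ++ m) := by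
  intro w x y z hs
  obtain ⟨u, v, huv, hu, hv⟩ := List.sublist_append_iff.1 hs
  have h' : ∀ x ∈ u, ∀ y ∈ v, x < y := fun x hx y hy => h x (hu.subset hx) y (hv.subset hy)
  rcases u with _ | ⟨p, _ | ⟨q, _ | ⟨r, _ | ⟨s, _ | ⟨t, u⟩⟩⟩⟩⟩
  · exact hm w x y z (by simpa [huv] using hv)
  all_goals simp only [List.cons_append, List.nil_append, List.cons.injEq] at huv
  · obtain ⟨rfl, rfl⟩ := huv
    simp at h'; omega
  · obtain ⟨rfl, rfl, rfl⟩ := huv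
    simp at h'; omega
  · obtain ⟨rfl, rfl, rfl, rfl⟩ := huv
    simp at h'; omega
  · obtain ⟨rfl, rfl, rfl, rfl, -⟩ := huv
    exact hl _ _ _ _ hu
  · simp at huv

theorem IsWord.lt_shift {k : ℕ} {a b : List ℕ} (ha : IsWord k a) :
    ∀ x ∈ a, ∀ y ∈ b.map (a.length + ·), x < y := by
  intro x hx y hy
  obtain ⟨z, -, rfl⟩ := List.mem_map.1 hy
  have := ha.2.2 x hx
  have := ha.2.1
  omega

theorem directSum_mem {k m : ℕ} {a b : List ℕ} (ha : IsWord k a ∧ PatternFree a)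
    (hb : b ∈ sepWords m) : directSum a b ∈ sepWords (k + m) := by
  rw [mem_sepWords] at hb ⊢
  obtain ⟨ha, hpa⟩ := ha
  obtain ⟨hb, hpb⟩ := hb
  have hlt := ha.lt_shift (b := b)
  refine ⟨⟨?_, by simp [directSum, ha.2.1, hb.2.1], ?_⟩,
    hpa.append (hpb.map fun x _ y _ => by omega) hlt⟩
  · refine List.Nodup.append ha.1 (hb.1.map fun x y h => by simpa using h) ?_
    intro x hx hx'
    exact lt_irrefl _ (hlt x hx x hx')
  · intro x hx
    rcases List.mem_append.1 hx with hx | hx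
    · have := ha.2.2 x hx; omega
    · obtain ⟨z, hz, rfl⟩ := List.mem_map.1 hx
      have := hb.2.2 z hz
      have := ha.2.1
      omega

theorem IsWord.of_append {n : ℕ} {a b : List ℕ} (h : IsWord n (a ++ b))
    (hab : ∀ x ∈ a, ∀ y ∈ b, x < y) : IsWord a.length a := by
  have hn := h.1.sublist (List.sublist_append_left a b)
  refine ⟨hn, rfl, ?_⟩
  intro x hx
  have hsub : Finset.range (x + 1) ⊆ a.toFinset := by
    intro z hz
    have hz : z ≤ x := by simpa [Nat.lt_succ_iff] using hz
    have hzl : z ∈ a ++ b := h.mem_iff.2 (hz.trans_lt (h.mem_iff.1 (by simp [hx])))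
    rcases List.mem_append.1 hzl with hz' | hz'
    · simpa using hz'
    · have := hab x hx z hz'; omega
  have := Finset.card_le_card hsub
  rw [Finset.card_range, List.toFinset_card_of_nodup hn] at this
  omega

theorem exists_directSum {n : ℕ} {l : List ℕ} (hl : l ∈ sepWords n) (hne : l ≠ []) :
    ∃ k m a b, k + m = n ∧ a ∈ indecWords k ∧ b ∈ sepWords m ∧ directSum a b = l := by
  rw [mem_sepWords] at hl
  obtain ⟨hw, hp⟩ := hl
  have hex : ∃ k, ∃ a b : List ℕ, a.length = k ∧ a ≠ [] ∧ l = a ++ b ∧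
      ∀ x ∈ a, ∀ y ∈ b, x < y := ⟨_, l, [], rfl, hne, by simp, by simp⟩
  obtain ⟨a, b, hk, ha, rfl, hab⟩ := Nat.find_spec hex
  have hmin : ∀ a' b' : List ℕ, a'.length < a.length → a' ≠ [] → a ++ b = a' ++ b' →
      ¬ ∀ x ∈ a', ∀ y ∈ b', x < y := by
    intro a' b' hl h1 h3 h4
    exact Nat.find_min hex (hk ▸ hl) ⟨a', b', rfl, h1, h3, h4⟩
  have hwa := hw.of_append hab
  have hge : ∀ y ∈ b, a.length ≤ y := by
    intro y hy
    by_contra hcon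
    have := hwa.mem_iff.2 (not_le.1 hcon)
    exact lt_irrefl _ (hab y this y hy)
  have hlen : a.length + b.length = n := by simpa using hw.2.1
  refine ⟨a.length, b.length, a, b.map (· - a.length), hlen, ?_, ?_, ?_⟩
  · refine mem_indecWords.2 ⟨⟨hwa, hp.sublist (List.sublist_append_left a b)⟩, ha, ?_⟩
    rintro ⟨c, d, hc, hd, rfl, hcd⟩
    refine hmin c (d ++ b) ?_ hc (by simp) ?_
    · have := List.length_pos_of_ne_nil hd
      simp; omega
    · intro x hx y hy
      rcases List.mem_append.1 hy with hy | hy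
      · exact hcd x hx y hy
      · exact hab x (by simp [hx]) y hy
  · refine mem_sepWords.2 ⟨⟨?_, by simp, ?_⟩, ?_⟩
    · refine (hw.1.sublist (List.sublist_append_right a b)).map_on ?_
      intro x hx y hy hxy
      have := hge x hx
      have := hge y hy
      omega
    · intro x hx
      obtain ⟨z, hz, rfl⟩ := List.mem_map.1 hx
      have := hw.2.2 z (by simp [hz])
      have := hge z hz
      omega
    · refine (hp.sublist (List.sublist_append_right a b)).map ?_
      intro x hx y hy
      have := hge x hx
      have := hge y hy
      omega
  · rw [directSum, List.map_map]
    congr 1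
    conv_rhs => rw [← List.map_id b]
    refine List.map_congr_left fun x hx => ?_
    have := hge x hx
    simp; omega

theorem not_directSum_of_length_lt {k k' : ℕ} {a b a' b' : List ℕ} (ha : a ∈ indecWords k)
    (ha' : a' ∈ indecWords k') (hlen : a.length < a'.length) :
    directSum a b ≠ directSum a' b' := by
  intro h
  obtain ⟨⟨hw, -⟩, hne, -⟩ := mem_indecWords.1 ha
  obtain ⟨⟨hw', -⟩, -, hs'⟩ := mem_indecWords.1 ha'
  rcases List.append_eq_append_iff.1 h with ⟨c, hc, hc'⟩ | ⟨c, hc, hc'⟩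
  · refine hs' ⟨a, c, hne, ?_, hc, ?_⟩
    · rintro rfl; simp [hc] at hlen
    · intro x hx y hy
      exact hw.lt_shift (b := b) x hx y (by rw [hc']; simp [hy])
  · simp [hc] at hlen

theorem sum_sepWords {n : ℕ} (hn : 1 ≤ n) (f : List ℕ → ℝ) :
    ∑ l ∈ sepWords n, f l = ∑ p ∈ Finset.HasAntidiagonal.antidiagonal n, ∑ a ∈ indecWords p.1,
      ∑ b ∈ sepWords p.2, f (directSum a b) := by
  simp_rw [← Finset.sum_product', Finset.sum_sigma']
  symm
  refine Finset.sum_nbij (fun q => directSum q.2.1 q.2.2) ?_ ?_ ?_ (fun _ _ => rfl)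
  · rintro ⟨⟨k, m⟩, a, b⟩ h
    simp only [Finset.mem_sigma, Finset.HasAntidiagonal.mem_antidiagonal, Finset.mem_product] at h
    obtain ⟨rfl, ha, hb⟩ := h
    exact directSum_mem (mem_indecWords.1 ha).1 hb
  · rintro ⟨⟨k, m⟩, a, b⟩ h ⟨⟨k', m'⟩, a', b'⟩ h' heq
    simp only [Finset.mem_coe, Finset.mem_sigma, Finset.HasAntidiagonal.mem_antidiagonal,
      Finset.mem_product] at h h'
    obtain ⟨hkm, ha, hb⟩ := h
    obtain ⟨hkm', ha', hb'⟩ := h'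
    simp only at heq
    have hlen : a.length = a'.length := by
      rcases lt_trichotomy a.length a'.length with h | h | h
      · exact absurd heq (not_directSum_of_length_lt ha ha' h)
      · exact h
      · exact absurd heq.symm (not_directSum_of_length_lt ha' ha h)
    obtain ⟨rfl, hmap⟩ := List.append_inj heq hlen
    obtain rfl : b = b' := (List.map_injective_iff.2 (add_right_injective a.length)) hmap
    have e1 := (mem_indecWords.1 ha).1.1.2.1
    have e1' := (mem_indecWords.1 ha').1.1.2.1
    obtain rfl : k = k' := e1.symm.trans e1'
    obtain rfl : m = m' := by omega
    rfl
  · intro l hl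
    have hl : l ∈ sepWords n := hl
    have hne : l ≠ [] := by
      rintro rfl
      have := (mem_sepWords.1 hl).1.2.1
      simp at this; omega
    obtain ⟨k, m, a, b, hkm, ha, hb, rfl⟩ := exists_directSum hl hne
    exact ⟨⟨(k, m), a, b⟩, by simp [hkm, ha, hb], rfl⟩

theorem sepWords_zero : sepWords 0 = {[]} := by
  ext l
  rw [mem_sepWords, Finset.mem_singleton]
  constructor
  · rintro ⟨⟨-, h, -⟩, -⟩
    exact List.length_eq_zero_iff.1 h
  · rintro rfl
    exact ⟨⟨by simp, rfl, by simp⟩, fun w x y z h => by simp at h⟩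

theorem sepWords_one : sepWords 1 = {[0]} := by
  ext l
  rw [mem_sepWords, Finset.mem_singleton]
  constructor
  · rintro ⟨⟨-, h, h'⟩, -⟩
    obtain ⟨a, rfl⟩ := List.length_eq_one_iff.1 h
    simpa using h'
  · rintro rfl
    exact ⟨⟨by simp, rfl, by simp⟩, fun w x y z h => by have := h.length_le; simp at this⟩

theorem indecWords_zero : indecWords 0 = ∅ := by
  rw [indecWords, sepWords_zero]
  ext l; simp; tauto

theorem indecWords_one : indecWords 1 = {[0]} := by
  rw [indecWords, sepWords_one, Finset.filter_singleton, if_pos]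
  exact ⟨by simp, fun h => by have := h.two_le_length; simp at this⟩

/-! ### Complementation -/

theorem compl_lt_compl {n : ℕ} {l : List ℕ} (h : IsWord n l) :
    ∀ x ∈ l, ∀ y ∈ l, n - 1 - x < n - 1 - y ↔ y < x := by
  intro x hx y hy
  have := h.2.2 x hx
  have := h.2.2 y hy
  omega

theorem compl_mem {n : ℕ} {l : List ℕ} (h : l ∈ sepWords n) :
    l.map (n - 1 - ·) ∈ sepWords n := by
  rw [mem_sepWords] at h ⊢
  obtain ⟨hw, hp⟩ := h
  have hanti := compl_lt_compl hw
  refine ⟨⟨hw.1.map_on ?_, by simpa using hw.2.1, ?_⟩, hp.map_anti hanti⟩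
  · intro x hx y hy hxy
    have := hw.2.2 x hx
    have := hw.2.2 y hy
    omega
  · intro x hx
    obtain ⟨z, hz, rfl⟩ := List.mem_map.1 hx
    have := hw.2.2 z hz
    omega

theorem compl_compl_word {n : ℕ} {l : List ℕ} (h : l ∈ sepWords n) :
    (l.map (n - 1 - ·)).map (n - 1 - ·) = l := by
  rw [List.map_map]
  conv_rhs => rw [← List.map_id l]
  refine List.map_congr_left fun x hx => ?_
  have := (mem_sepWords.1 h).1.2.2 x hx
  simp; omega

theorem sum_compl {n : ℕ} (f : List ℕ → ℝ) :
    ∑ l ∈ sepWords n, f (l.map (n - 1 - ·)) = ∑ l ∈ sepWords n, f l :=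
  Finset.sum_nbij' (fun l => l.map (n - 1 - ·)) (fun l => l.map (n - 1 - ·))
    (fun _ h => compl_mem h) (fun _ h => compl_mem h) (fun _ h => compl_compl_word h)
    (fun _ h => compl_compl_word h) (fun _ _ => rfl)

theorem Splits.map {r r' : ℕ → ℕ → Prop} {l : List ℕ} {f : ℕ → ℕ} (h : Splits r l)
    (hf : ∀ x ∈ l, ∀ y ∈ l, r x y → r' (f x) (f y)) : Splits r' (l.map f) := by
  obtain ⟨a, b, ha, hb, rfl, hab⟩ := h
  refine ⟨a.map f, b.map f, by simpa, by simpa, by simp, ?_⟩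
  intro x hx y hy
  obtain ⟨u, hu, rfl⟩ := List.mem_map.1 hx
  obtain ⟨v, hv, rfl⟩ := List.mem_map.1 hy
  exact hf u (by simp [hu]) v (by simp [hv]) (hab u hu v hv)

theorem two_mul_sum_indecWords {n : ℕ} (hn : 2 ≤ n) (f : List ℕ → ℝ)
    (hf : ∀ l ∈ sepWords n, f (l.map (n - 1 - ·)) = f l) :
    2 * ∑ l ∈ indecWords n, f l = ∑ l ∈ sepWords n, f l := by
  rw [← Finset.sum_filter_not_add_sum_filter (sepWords n) (fun l => Splits (· < ·) l)]
  have h1 : (sepWords n).filter (fun l => ¬ Splits (· < ·) l) = indecWords n := by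
    refine Finset.filter_congr fun l hl => ?_
    have : l ≠ [] := by
      rintro rfl
      have := (mem_sepWords.1 hl).1.2.1
      simp at this; omega
    simp [this]
  have h2 : ∑ l ∈ (sepWords n).filter (fun l => Splits (· < ·) l), f l =
      ∑ l ∈ (sepWords n).filter (fun l => ¬ Splits (· < ·) l), f l := by
    refine Finset.sum_nbij' (fun l => l.map (n - 1 - ·)) (fun l => l.map (n - 1 - ·)) ?_ ?_ ?_ ?_ ?_
    · intro l hl
      rw [Finset.mem_filter] at hl ⊢
      have hanti := compl_lt_compl (mem_sepWords.1 hl.1).1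
      refine ⟨compl_mem hl.1, fun hs => hs.not_splits_gt ?_⟩
      exact hl.2.map fun x hx y hy hxy => (hanti y hy x hx).2 hxy
    · intro l hl
      rw [Finset.mem_filter] at hl ⊢
      obtain ⟨hw, hp⟩ := mem_sepWords.1 hl.1
      have hanti := compl_lt_compl hw
      refine ⟨compl_mem hl.1, ?_⟩
      have := (hp.splits_or (by rw [hw.2.1]; exact hn) hw.1).resolve_left hl.2
      exact this.map fun x hx y hy hxy => (hanti x hx y hy).2 hxy
    · exact fun l hl => compl_compl_word (Finset.mem_filter.1 hl).1
    · exact fun l hl => compl_compl_word (Finset.mem_filter.1 hl).1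
    · exact fun l hl => (hf l (Finset.mem_filter.1 hl).1).symm
  rw [h2, h1]; ring

theorem two_mul_sum_of_compl {n : ℕ} (f : List ℕ → ℝ)
    (hf : ∀ l ∈ sepWords n, f (l.map (n - 1 - ·)) + f l = 1) :
    2 * ∑ l ∈ sepWords n, f l = (sepWords n).card := by
  have : ∑ l ∈ sepWords n, (f (l.map (n - 1 - ·)) + f l) = (sepWords n).card := by
    rw [Finset.sum_congr rfl hf]; simp
  rw [Finset.sum_add_distrib, sum_compl] at this
  linarith

/-! ### Generating functions -/

/-- The generating function of the statistic `f` summed over the words in `W n`. -/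
noncomputable def genFun (W : ℕ → Finset (List ℕ)) (f : List ℕ → ℝ) : PowerSeries ℝ :=
  PowerSeries.mk fun n => ∑ l ∈ W n, f l

theorem coeff_genFun (W : ℕ → Finset (List ℕ)) (f : List ℕ → ℝ) (n : ℕ) :
    PowerSeries.coeff n (genFun W f) = ∑ l ∈ W n, f l :=
  PowerSeries.coeff_mk _ _

theorem constantCoeff_genFun (W : ℕ → Finset (List ℕ)) (f : List ℕ → ℝ) :
    PowerSeries.constantCoeff (genFun W f) = ∑ l ∈ W 0, f l := by
  rw [← PowerSeries.coeff_zero_eq_constantCoeff_apply, coeff_genFun]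

theorem coeff_two_mul (F : PowerSeries ℝ) (n : ℕ) :
    PowerSeries.coeff n (2 * F) = 2 * PowerSeries.coeff n F := by
  rw [two_mul, map_add, two_mul]

theorem powerSeries_two_ne_zero : (2 : PowerSeries ℝ) ≠ 0 := by
  intro h
  have := congrArg PowerSeries.constantCoeff h
  rw [map_ofNat, map_zero] at this
  norm_num at this

theorem coeff_genFun_mul (W W' : ℕ → Finset (List ℕ)) (f g : List ℕ → ℝ) (n : ℕ) :
    PowerSeries.coeff n (genFun W f * genFun W' g) =
      ∑ p ∈ Finset.HasAntidiagonal.antidiagonal n, ∑ a ∈ W p.1, ∑ b ∈ W' p.2, f a * g b := by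
  rw [PowerSeries.coeff_mul]
  exact Finset.sum_congr rfl fun p _ => by
    rw [coeff_genFun, coeff_genFun, Finset.sum_mul_sum]

theorem ext_coeff_pos {F G : PowerSeries ℝ} (h0 : PowerSeries.coeff 0 F = PowerSeries.coeff 0 G)
    (h : ∀ n, 1 ≤ n → PowerSeries.coeff n F = PowerSeries.coeff n G) : F = G := by
  ext n
  rcases Nat.eq_zero_or_pos n with rfl | hn
  · exact h0
  · exact h n hn

theorem genFun_sepWords_empty : genFun sepWords (fun l => if l = [] then 1 else 0) = 1 := by
  apply ext_coeff_pos
  · simp [constantCoeff_genFun, sepWords_zero]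
  · intro n hn
    rw [coeff_genFun, PowerSeries.coeff_one, if_neg (by omega)]
    refine Finset.sum_eq_zero fun l hl => if_neg ?_
    rintro rfl
    have := (mem_sepWords.1 hl).1.2.1
    simp at this; omega

theorem ne_nil_of_mem_indecWords {n : ℕ} {l : List ℕ} (h : l ∈ indecWords n) : l ≠ [] :=
  (mem_indecWords.1 h).2.1

theorem lastDesc_directSum {k : ℕ} {a b : List ℕ} (ha : a ∈ indecWords k) :
    (lastDesc (directSum a b) : ℝ) =
      lastDesc a * (if b = [] then 1 else 0) + 1 * lastDesc b := by
  by_cases hb : b = []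
  · simp [hb, directSum, lastDesc]
  · rw [directSum, lastDesc_append (ne_nil_of_mem_indecWords ha) (by simpa)
      (mem_indecWords.1 ha).1.1.lt_shift, lastDesc_map (add_right_strictMono)]
    simp [hb]

theorem dirChanges_directSum {k : ℕ} {a b : List ℕ} (ha : a ∈ indecWords k) :
    (dirChanges (directSum a b) : ℝ) = dirChanges a * 1 + 1 * dirChanges b +
      (lastDesc a * 1 - lastDesc a * (if b = [] then 1 else 0)) + 1 * firstDesc b := by
  by_cases hb : b = []
  · simp [hb, directSum, dirChanges, firstDesc]
  · rw [directSum, dirChanges_append (ne_nil_of_mem_indecWords ha) (by simpa)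
      (mem_indecWords.1 ha).1.1.lt_shift, dirChanges_map (add_right_strictMono),
      firstDesc_map (add_right_strictMono)]
    simp [hb]; ring

theorem genFun_sepWords_one :
    genFun sepWords (fun _ => 1) =
      1 + genFun indecWords (fun _ => 1) * genFun sepWords (fun _ => 1) := by
  apply ext_coeff_pos
  · simp [constantCoeff_genFun, sepWords_zero, indecWords_zero]
  · intro n hn
    rw [coeff_genFun, map_add, coeff_genFun_mul, sum_sepWords hn, PowerSeries.coeff_one,
      if_neg (by omega), zero_add]
    simp

theorem genFun_sepWords_lastDesc :
    genFun sepWords (fun l => lastDesc l) = genFun indecWords (fun l => lastDesc l) +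
      genFun indecWords (fun _ => 1) * genFun sepWords (fun l => lastDesc l) := by
  apply ext_coeff_pos
  · simp [constantCoeff_genFun, sepWords_zero, indecWords_zero, lastDesc]
  · intro n hn
    conv_rhs => rw [← mul_one (genFun indecWords fun l => (lastDesc l : ℝ)),
      ← genFun_sepWords_empty]
    rw [coeff_genFun, map_add, coeff_genFun_mul, coeff_genFun_mul, sum_sepWords hn,
      ← Finset.sum_add_distrib]
    refine Finset.sum_congr rfl fun p _ => ?_
    rw [← Finset.sum_add_distrib]
    refine Finset.sum_congr rfl fun a ha => ?_
    rw [← Finset.sum_add_distrib]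
    exact Finset.sum_congr rfl fun b _ => lastDesc_directSum ha

theorem genFun_sepWords_dirChanges :
    genFun sepWords (fun l => dirChanges l) =
      genFun indecWords (fun l => dirChanges l) * genFun sepWords (fun _ => 1) +
      genFun indecWords (fun _ => 1) * genFun sepWords (fun l => dirChanges l) +
      (genFun indecWords (fun l => lastDesc l) * genFun sepWords (fun _ => 1) -
        genFun indecWords (fun l => lastDesc l)) +
      genFun indecWords (fun _ => 1) * genFun sepWords (fun l => firstDesc l) := by
  apply ext_coeff_pos
  · simp [constantCoeff_genFun, sepWords_zero, indecWords_zero, dirChanges]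
  · intro n hn
    conv_rhs => enter [2, 1, 2, 2]; rw [← mul_one (genFun indecWords fun l => (lastDesc l : ℝ)),
      ← genFun_sepWords_empty]
    simp only [map_add, map_sub, coeff_genFun_mul]
    rw [coeff_genFun, sum_sepWords hn]
    simp only [← Finset.sum_add_distrib, ← Finset.sum_sub_distrib]
    refine Finset.sum_congr rfl fun p _ => ?_
    refine Finset.sum_congr rfl fun a ha => ?_
    exact Finset.sum_congr rfl fun b _ => dirChanges_directSum ha

theorem ext_coeff_two {F G : PowerSeries ℝ} (h0 : PowerSeries.coeff 0 F = PowerSeries.coeff 0 G)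
    (h1 : PowerSeries.coeff 1 F = PowerSeries.coeff 1 G)
    (h : ∀ n, PowerSeries.coeff (n + 2) F = PowerSeries.coeff (n + 2) G) : F = G := by
  ext n
  rcases n with _ | _ | n
  · exact h0
  · exact h1
  · exact h n

theorem two_mul_genFun_indecWords_one :
    2 * genFun indecWords (fun _ => 1) = genFun sepWords (fun _ => 1) - 1 + PowerSeries.X := by
  apply ext_coeff_two
  · simp [constantCoeff_genFun, sepWords_zero, indecWords_zero]
  · simp [coeff_two_mul, coeff_genFun, sepWords_one, indecWords_one, PowerSeries.coeff_one]
    norm_num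
  · intro n
    simp only [map_add, map_sub, coeff_genFun, PowerSeries.coeff_one, PowerSeries.coeff_X,
      coeff_two_mul]
    rw [two_mul_sum_indecWords (by omega) _ fun _ _ => rfl]
    simp

theorem two_mul_genFun_indecWords_dirChanges :
    2 * genFun indecWords (fun l => dirChanges l) = genFun sepWords (fun l => dirChanges l) := by
  apply ext_coeff_two
  · simp [constantCoeff_genFun, sepWords_zero, indecWords_zero, dirChanges]
  · simp [coeff_two_mul, coeff_genFun, sepWords_one, indecWords_one, dirChanges]
  · intro n
    simp only [coeff_genFun, coeff_two_mul]
    refine two_mul_sum_indecWords (by omega) _ fun l hl => ?_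
    have hw := (mem_sepWords.1 hl).1
    rw [dirChanges_map_anti hw.1 (compl_lt_compl hw)]

theorem two_mul_genFun_lastDesc :
    2 * genFun sepWords (fun l => lastDesc l) =
      genFun sepWords (fun _ => 1) - 1 - PowerSeries.X := by
  apply ext_coeff_two
  · simp [constantCoeff_genFun, sepWords_zero, lastDesc]
  · simp [coeff_two_mul, coeff_genFun, sepWords_one, lastDesc, PowerSeries.coeff_one]
  · intro n
    simp only [map_sub, coeff_genFun, coeff_two_mul]
    rw [two_mul_sum_of_compl]
    · simp [PowerSeries.coeff_one, PowerSeries.coeff_X]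
    · intro l hl
      have hw := (mem_sepWords.1 hl).1
      exact_mod_cast lastDesc_map_anti hw.1 (by rw [hw.2.1]; omega) (compl_lt_compl hw)

theorem two_mul_genFun_firstDesc :
    2 * genFun sepWords (fun l => firstDesc l) =
      genFun sepWords (fun _ => 1) - 1 - PowerSeries.X := by
  apply ext_coeff_two
  · simp [constantCoeff_genFun, sepWords_zero, firstDesc]
  · simp [coeff_two_mul, coeff_genFun, sepWords_one, firstDesc, PowerSeries.coeff_one]
  · intro n
    simp only [map_sub, coeff_genFun, coeff_two_mul]
    rw [two_mul_sum_of_compl]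
    · simp [PowerSeries.coeff_one, PowerSeries.coeff_X]
    · intro l hl
      have hw := (mem_sepWords.1 hl).1
      exact_mod_cast firstDesc_map_anti hw.1 (by rw [hw.2.1]; omega) (compl_lt_compl hw)

/-- The square root of `1 - 6 X + X ^ 2`, in terms of the generating function of `sepWords`. -/
noncomputable def sqrtDisc : PowerSeries ℝ :=
  3 - PowerSeries.X - 2 * genFun sepWords (fun _ => 1)

theorem sqrtDisc_sq : sqrtDisc ^ 2 = 1 - 6 * PowerSeries.X + PowerSeries.X ^ 2 := by
  have h1 := genFun_sepWords_one
  have h2 := two_mul_genFun_indecWords_one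
  rw [sqrtDisc]
  set S := genFun sepWords (fun _ => 1)
  linear_combination -8 * h1 - 4 * S * h2

theorem genFun_dirChanges_mul_sqrtDisc :
    2 * genFun sepWords (fun l => dirChanges l) * sqrtDisc =
      1 - 4 * PowerSeries.X - PowerSeries.X ^ 2 - (1 - PowerSeries.X) * sqrtDisc := by
  have h1 := genFun_sepWords_one
  have h2 := two_mul_genFun_indecWords_one
  have h3 := genFun_sepWords_lastDesc
  have h4 := genFun_sepWords_dirChanges
  have h5 := two_mul_genFun_indecWords_dirChanges
  have h6 := two_mul_genFun_lastDesc
  have h7 := two_mul_genFun_firstDesc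
  rw [sqrtDisc]
  set S := genFun sepWords (fun _ => 1)
  set I := genFun indecWords (fun _ => 1)
  set N := genFun sepWords (fun l => dirChanges l)
  set J := genFun indecWords (fun l => dirChanges l)
  set U := genFun sepWords (fun l => lastDesc l)
  set D := genFun indecWords (fun l => lastDesc l)
  set V := genFun sepWords (fun l => firstDesc l)
  have hS : 2 * S = 2 + (S - 1 + PowerSeries.X) * S := by linear_combination 2 * h1 + S * h2
  have hD : 4 * D = (S - 1 - PowerSeries.X) * (2 - (S - 1 + PowerSeries.X)) := by
    linear_combination (-4) * h3 + (2 - 2 * I) * h6 - (S - 1 - PowerSeries.X) * h2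
  have hV : 4 * (I * V) = (S - 1 + PowerSeries.X) * (S - 1 - PowerSeries.X) := by
    linear_combination 2 * V * h2 + (S - 1 + PowerSeries.X) * h7
  have hN : 2 * N = N * S + (S - 1 + PowerSeries.X) * N + 2 * (D * S - D) + 2 * (I * V) := by
    linear_combination 2 * h4 + S * h5 + N * h2
  have key : 4 * (N * (3 - PowerSeries.X - 2 * S)) =
      4 * ((S - 1) ^ 2 - PowerSeries.X ^ 2) := by
    linear_combination 4 * hN + 2 * (S - 1) * hD + 2 * hV +
      2 * (S - 1 - PowerSeries.X) * hS
  have key' : N * (3 - PowerSeries.X - 2 * S) = (S - 1) ^ 2 - PowerSeries.X ^ 2 :=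
    by
    apply mul_left_cancel₀ powerSeries_two_ne_zero
    apply mul_left_cancel₀ powerSeries_two_ne_zero
    linear_combination key
  linear_combination 2 * key' - 2 * hS

theorem sqrtDisc_ne_zero : sqrtDisc ≠ 0 := by
  intro h
  have := congrArg (PowerSeries.coeff 0) sqrtDisc_sq
  simp [h] at this

theorem sqrtDisc_mul_derivative :
    sqrtDisc * PowerSeries.derivative ℝ sqrtDisc = PowerSeries.X - 3 := by
  have h := congrArg (PowerSeries.derivative ℝ) sqrtDisc_sq
  have h6 : (6 : PowerSeries ℝ) = PowerSeries.C 6 := (map_ofNat _ 6).symm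
  rw [pow_two, pow_two, h6] at h
  simp only [map_add, map_sub, Derivation.leibniz, PowerSeries.derivative_X,
    PowerSeries.derivative_C, smul_eq_mul, Derivation.map_one_eq_zero] at h
  apply mul_left_cancel₀ powerSeries_two_ne_zero
  linear_combination h + h6

theorem disc_mul_derivative :
    (1 - 6 * PowerSeries.X + PowerSeries.X ^ 2) * PowerSeries.derivative ℝ sqrtDisc =
      (PowerSeries.X - 3) * sqrtDisc := by
  linear_combination (-PowerSeries.derivative ℝ sqrtDisc) * sqrtDisc_sq +
    sqrtDisc * sqrtDisc_mul_derivative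

theorem genFun_dirChanges_eq :
    16 * genFun sepWords (fun l => dirChanges l) =
      -(1 - 4 * PowerSeries.X - PowerSeries.X ^ 2) *
        ((3 - PowerSeries.X) * PowerSeries.derivative ℝ sqrtDisc + sqrtDisc) -
      8 * (1 - PowerSeries.X) := by
  apply mul_right_cancel₀ sqrtDisc_ne_zero
  linear_combination 8 * genFun_dirChanges_mul_sqrtDisc +
    (1 - 4 * PowerSeries.X - PowerSeries.X ^ 2) *
      ((3 - PowerSeries.X) * sqrtDisc_mul_derivative + sqrtDisc_sq)

/-! ### Coefficient asymptotics -/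

theorem coeff_sqrtDisc (n : ℕ) :
    PowerSeries.coeff (n + 2) sqrtDisc = -2 * ((sepWords (n + 2)).card : ℝ) := by
  have h3 : (3 : PowerSeries ℝ) = PowerSeries.C 3 := (map_ofNat _ 3).symm
  rw [sqrtDisc, map_sub, map_sub, coeff_two_mul, coeff_genFun, h3, PowerSeries.coeff_C,
    PowerSeries.coeff_X, if_neg (by omega), if_neg (by omega)]
  simp

theorem coeff_one_sqrtDisc : PowerSeries.coeff 1 sqrtDisc = -3 := by
  have h3 : (3 : PowerSeries ℝ) = PowerSeries.C 3 := (map_ofNat _ 3).symm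
  rw [sqrtDisc, map_sub, map_sub, coeff_two_mul, coeff_genFun, h3, PowerSeries.coeff_C,
    PowerSeries.coeff_X, sepWords_one]
  norm_num

theorem coeff_zero_sqrtDisc : PowerSeries.coeff 0 sqrtDisc = 1 := by
  have h3 : (3 : PowerSeries ℝ) = PowerSeries.C 3 := (map_ofNat _ 3).symm
  rw [sqrtDisc, map_sub, map_sub, coeff_two_mul, coeff_genFun, h3, PowerSeries.coeff_C,
    PowerSeries.coeff_X, sepWords_zero]
  norm_num

theorem coeff_sqrtDisc_rec (n : ℕ) :
    (n + 2) * PowerSeries.coeff (n + 2) sqrtDisc =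
      (6 * n + 3) * PowerSeries.coeff (n + 1) sqrtDisc -
        (n - 1) * PowerSeries.coeff n sqrtDisc := by
  have h := disc_mul_derivative
  have h' : PowerSeries.derivative ℝ sqrtDisc -
      PowerSeries.C 6 * (PowerSeries.X * PowerSeries.derivative ℝ sqrtDisc) +
      PowerSeries.X * (PowerSeries.X * PowerSeries.derivative ℝ sqrtDisc) =
      PowerSeries.X * sqrtDisc - PowerSeries.C 3 * sqrtDisc := by
    simp only [map_ofNat]
    linear_combination h
  have h1 := congrArg (PowerSeries.coeff (n + 1)) h'
  simp only [map_add, map_sub, PowerSeries.coeff_C_mul, PowerSeries.coeff_succ_X_mul,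
    PowerSeries.coeff_derivative] at h1
  rcases n with _ | n
  · simp only [PowerSeries.coeff_zero_X_mul] at h1
    push_cast at h1 ⊢
    linear_combination h1
  · simp only [PowerSeries.coeff_succ_X_mul, PowerSeries.coeff_derivative] at h1
    push_cast at h1 ⊢
    linear_combination h1

theorem card_sepWords_two : (sepWords 2).card = 2 := by
  have h := coeff_sqrtDisc_rec 0
  rw [coeff_sqrtDisc, zero_add, coeff_one_sqrtDisc, coeff_zero_sqrtDisc] at h
  norm_num at h
  have : ((sepWords 2).card : ℝ) = 2 := by linarith
  exact_mod_cast this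

theorem card_sepWords_rec (n : ℕ) :
    (n + 4 : ℝ) * (sepWords (n + 4)).card =
      (6 * n + 15) * (sepWords (n + 3)).card - (n + 1) * (sepWords (n + 2)).card := by
  have h := coeff_sqrtDisc_rec (n + 2)
  rw [coeff_sqrtDisc (n + 2), show n + 2 + 1 = (n + 1) + 2 by rfl, coeff_sqrtDisc (n + 1),
    coeff_sqrtDisc n] at h
  push_cast at h
  linear_combination (-1 / 2) * h

theorem card_sepWords_three : (sepWords 3).card = 6 := by
  have h := coeff_sqrtDisc_rec 1
  rw [coeff_sqrtDisc 1, coeff_sqrtDisc 0] at h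
  norm_num [card_sepWords_two] at h
  have : ((sepWords 3).card : ℝ) = 6 := by linarith
  exact_mod_cast this

theorem coeff_genFun_dirChanges (n : ℕ) :
    8 * ∑ l ∈ sepWords (n + 4), (dirChanges l : ℝ) =
      3 * (n + 5) * (sepWords (n + 5)).card - 13 * (n + 4) * (sepWords (n + 4)).card +
      (n + 3) * (sepWords (n + 3)).card + (n + 2) * (sepWords (n + 2)).card +
      (sepWords (n + 4)).card - 4 * (sepWords (n + 3)).card - (sepWords (n + 2)).card := by
  have h := genFun_dirChanges_eq
  have h' : PowerSeries.C 16 * genFun sepWords (fun l => dirChanges l) =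
      PowerSeries.C 13 * (PowerSeries.X * PowerSeries.derivative ℝ sqrtDisc) -
      PowerSeries.C 3 * PowerSeries.derivative ℝ sqrtDisc -
      PowerSeries.X * (PowerSeries.X * PowerSeries.derivative ℝ sqrtDisc) -
      PowerSeries.X * (PowerSeries.X * (PowerSeries.X * PowerSeries.derivative ℝ sqrtDisc)) -
      sqrtDisc + PowerSeries.C 4 * (PowerSeries.X * sqrtDisc) +
      PowerSeries.X * (PowerSeries.X * sqrtDisc) -
      PowerSeries.C 8 * (1 - PowerSeries.X) := by
    simp only [map_ofNat]
    linear_combination h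
  have h1 := congrArg (PowerSeries.coeff (n + 4)) h'
  simp only [map_add, map_sub, PowerSeries.coeff_C_mul, PowerSeries.coeff_succ_X_mul,
    PowerSeries.coeff_derivative, PowerSeries.coeff_one, PowerSeries.coeff_X, coeff_genFun,
    coeff_sqrtDisc (n + 3), coeff_sqrtDisc (n + 2), coeff_sqrtDisc (n + 1),
    coeff_sqrtDisc n] at h1
  rw [if_neg (by omega), if_neg (by omega)] at h1
  push_cast at h1
  linear_combination (1 / 2) * h1

theorem two_mul_card_le (n : ℕ) :
    0 < (sepWords (n + 2)).card ∧
      2 * ((sepWords (n + 2)).card : ℝ) ≤ (sepWords (n + 3)).card := by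
  induction n with
  | zero => norm_num [card_sepWords_two, card_sepWords_three]
  | succ n ih =>
    obtain ⟨h0, h1⟩ := ih
    have h0' : (0 : ℝ) < (sepWords (n + 2)).card := by exact_mod_cast h0
    have h3 : (0 : ℝ) < (sepWords (n + 3)).card := by linarith
    refine ⟨by exact_mod_cast h3, ?_⟩
    have hrec := card_sepWords_rec n
    have hn : (0 : ℝ) ≤ n := Nat.cast_nonneg n
    have h5 : (n + 4 : ℝ) * (2 * (sepWords (n + 3)).card) ≤
        (n + 4) * (sepWords (n + 4)).card := by
      rw [hrec]
      nlinarith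
    exact le_of_mul_le_mul_left h5 (by linarith)

theorem card_sepWords_pos (n : ℕ) : (0 : ℝ) < (sepWords (n + 2)).card := by
  exact_mod_cast (two_mul_card_le n).1

theorem abs_ratio_sub_le (n : ℕ) :
    |((sepWords (n + 3)).card : ℝ) / (sepWords (n + 2)).card - (3 + 2 * √2)| ≤
      22 / (n + 1) := by
  have hsq : √2 * √2 = 2 := Real.mul_self_sqrt (by norm_num)
  have h2 : (1 : ℝ) ≤ √2 := by rw [Real.one_le_sqrt]; norm_num
  have h2' : √2 ≤ 2 := by nlinarith
  induction n with
  | zero =>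
    norm_num [card_sepWords_two, card_sepWords_three]
    rw [abs_of_nonneg (by linarith)]; linarith
  | succ n ih =>
    have hn : (0 : ℝ) ≤ n := Nat.cast_nonneg n
    have hrec := card_sepWords_rec n
    have hp := card_sepWords_pos n
    have hp' := card_sepWords_pos (n + 1)
    have hle := (two_mul_card_le n).2
    set q : ℝ := ((sepWords (n + 3)).card : ℝ) / (sepWords (n + 2)).card with hq
    clear_value q
    have hq2 : 2 ≤ q := by rw [hq, le_div_iff₀ hp]; exact hle
    have hqn : ((sepWords (n + 1 + 3)).card : ℝ) / (sepWords (n + 1 + 2)).card =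
        ((6 * n + 15) - (n + 1) / q) / (n + 4) := by
      have e3 : ((sepWords (n + 3)).card : ℝ) = q * (sepWords (n + 2)).card := by
        rw [hq]; field_simp
      change ((sepWords (n + 4)).card : ℝ) / (sepWords (n + 3)).card = _
      rw [div_eq_div_iff hp'.ne' (by positivity), mul_comm, hrec, e3]
      linear_combination ((sepWords (n + 2)).card : ℝ) *
        (div_mul_cancel₀ ((n : ℝ) + 1) (by positivity : q ≠ 0))
    rw [hqn]
    have hsplit : ((6 * n + 15) - (n + 1) / q) / (n + 4) - (3 + 2 * √2) =
        (q - (3 + 2 * √2)) * (3 - 2 * √2) / q + (3 / q - 9) / (n + 4) := by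
      have : q ≠ 0 := by positivity
      have : (n + 4 : ℝ) ≠ 0 := by positivity
      field_simp
      linear_combination (-4 * (n + 4 : ℝ)) * hsq
    rw [hsplit]
    have hb1 : |(q - (3 + 2 * √2)) * (3 - 2 * √2) / q| ≤ 22 / (n + 1) / 4 := by
      rw [abs_div, abs_mul, abs_of_pos (by linarith : 0 < q), div_le_iff₀ (by linarith)]
      have h3 : |3 - 2 * √2| ≤ 1 / 2 := by
        rw [abs_le]; constructor <;> nlinarith
      calc |q - (3 + 2 * √2)| * |3 - 2 * √2| ≤ 22 / (n + 1) * (1 / 2) :=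
            mul_le_mul ih h3 (abs_nonneg _) (by positivity)
        _ ≤ 22 / (n + 1) / 4 * q := by
            have : (0 : ℝ) ≤ 22 / (n + 1) := by positivity
            nlinarith
    have hb2 : |(3 / q - 9) / (n + 4)| ≤ 9 / (n + 4) := by
      rw [abs_div, abs_of_pos (by positivity : (0 : ℝ) < n + 4)]
      gcongr
      have h3 : 3 / q ≤ 3 / 2 := by gcongr
      have h4 : 0 ≤ 3 / q := by positivity
      rw [abs_le]; constructor <;> linarith
    have hb3 : (22 : ℝ) / (n + 1) / 4 + 9 / (n + 4) ≤ 22 / ((n + 1 : ℕ) + 1) := by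
      push_cast
      rw [div_div, div_add_div _ _ (by positivity) (by positivity),
        div_le_div_iff₀ (by positivity) (by positivity)]
      nlinarith [mul_nonneg hn hn, mul_nonneg hn (mul_nonneg hn hn)]
    exact (abs_add_le _ _).trans ((add_le_add hb1 hb2).trans hb3)

theorem tendsto_ratio :
    Tendsto (fun n : ℕ => ((sepWords (n + 3)).card : ℝ) / (sepWords (n + 2)).card) atTop
      (nhds (3 + 2 * √2)) := by
  rw [tendsto_iff_norm_sub_tendsto_zero]
  have h := (tendsto_one_div_add_atTop_nhds_zero_nat (𝕜 := ℝ)).const_mul 22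
  rw [mul_zero] at h
  refine squeeze_zero (fun _ => norm_nonneg _) (fun n => ?_) h
  rw [Real.norm_eq_abs, mul_one_div]
  exact abs_ratio_sub_le n

theorem tendsto_dirChanges :
    Tendsto (fun n : ℕ => (∑ l ∈ sepWords (n + 4), (dirChanges l : ℝ)) /
      ((n + 4) * (sepWords (n + 4)).card)) atTop (nhds (2 - √2)) := by
  have hsq : √2 * √2 = 2 := Real.mul_self_sqrt (by norm_num)
  have hinv : (3 + 2 * √2)⁻¹ = 3 - 2 * √2 :=
    inv_eq_of_mul_eq_one_right (by linear_combination (-4) * hsq)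
  have ha := (tendsto_add_atTop_iff_nat 2).2 tendsto_ratio
  have hb := ((tendsto_add_atTop_iff_nat 1).2 tendsto_ratio).inv₀ (by positivity)
  have hc := hb.mul (tendsto_ratio.inv₀ (by positivity))
  have ht : Tendsto (fun n : ℕ => (1 : ℝ) / (n + 4)) atTop (nhds 0) := by
    have := (tendsto_add_atTop_iff_nat 3).2 (tendsto_one_div_add_atTop_nhds_zero_nat (𝕜 := ℝ))
    refine this.congr fun n => ?_
    push_cast; ring
  rw [hinv] at hb hc
  have hlim := ((((ha.const_mul 3).mul (ht.const_add 1)).sub_const 13).add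
    ((hb.mul (ht.const_sub 1)).add (hc.mul ((ht.const_mul 2).const_sub 1)))).add
    ((ht.sub ((hb.const_mul 4).mul ht)).sub (hc.mul ht))
  have hlim := hlim.div_const 8
  have hval : (3 * (3 + 2 * √2) * (1 + 0) - 13 + ((3 - 2 * √2) * (1 - 0) +
      (3 - 2 * √2) * (3 - 2 * √2) * (1 - 2 * 0)) +
      (0 - 4 * (3 - 2 * √2) * 0 - (3 - 2 * √2) * (3 - 2 * √2) * 0)) / 8 = 2 - √2 := by
    linear_combination (1 / 2) * hsq
  rw [hval] at hlim
  refine hlim.congr fun n => ?_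
  have h2 := (card_sepWords_pos n).ne'
  have h3 := (card_sepWords_pos (n + 1)).ne'
  have h4 := (card_sepWords_pos (n + 2)).ne'
  have hn : (n + 4 : ℝ) ≠ 0 := by positivity
  have h := coeff_genFun_dirChanges n
  simp only [show n + 2 + 3 = n + 5 by rfl, show n + 2 + 2 = n + 4 by rfl,
    show n + 1 + 2 = n + 3 by rfl] at h3 h4 ⊢
  field_simp
  linear_combination -h

theorem sepExp_altLen {n : ℕ} (hn : 2 ≤ n) (hc : ((sepWords n).card : ℝ) ≠ 0) :
    sepExp n (fun σ => (altLen σ : ℝ)) / n =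
      (∑ l ∈ sepWords n, (dirChanges l : ℝ)) / (n * (sepWords n).card) + 2 / n := by
  have hcard : (SEP n).card = (sepWords n).card :=
    (Finset.card_image_of_injective _ word_injective).symm
  have hn' : (n : ℝ) ≠ 0 := by positivity
  rw [sepExp, hcard, sum_sepWords_eq]
  simp_rw [altLen_eq hn]
  push_cast
  rw [Finset.sum_add_distrib, Finset.sum_const, hcard, nsmul_eq_mul]
  field_simp

/-- The expected length of the longest alternating subsequence of a uniformly random
separable permutation of `[n]` is asymptotic to `(2 - √2) n`. -/
theorem mean_altLen_asymp :
    Tendsto (fun n : ℕ => sepExp n (fun σ => (altLen σ : ℝ)) / n) atTop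
      (nhds (2 - Real.sqrt 2)) := by
  refine (tendsto_add_atTop_iff_nat 4).1 ?_
  have h0 : Tendsto (fun n : ℕ => (2 : ℝ) / ((n + 4 : ℕ) : ℝ)) atTop (nhds 0) :=
    (tendsto_add_atTop_iff_nat 4).2 (tendsto_const_div_atTop_nhds_zero_nat (2 : ℝ))
  have h := tendsto_dirChanges.add h0
  rw [add_zero] at h
  refine h.congr fun n => ?_
  rw [sepExp_altLen (n := n + 4) (by omega) (card_sepWords_pos (n + 2)).ne']
  push_cast
  rfl
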